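/- arXiv:1007.3467 — 2 statements merged into one kernel-verified Lean document; each statement's English description precedes it below -/
import Mathlib

section
/- Let σ be a fixed-point-free settled Strang canonical permutation of {1,…,n} of bandwidth w (necessarily w > 0 since σ has no fixed points). Then σ can be written as a product of at most 2w − 1 permutations of {1,…,n}, each of bandwidth at most 1. -/
/-- The bandwidth of a permutation `σ` of `{0,…,n-1}`: `max_i |σ(i) - i|`. -/
def bandwidth {n : ℕ} (σ : Equiv.Perm (Fin n)) : ℕ :=
  Finset.univ.sup fun i : Fin n => ((σ i : ℤ) - (i : ℤ)).natAbs

/-- `c` is a cut point of `σ` if `σ` maps the initial segment `{0,…,c}` onto itself. -/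
def IsCutPoint {n : ℕ} (σ : Equiv.Perm (Fin n)) (c : Fin n) : Prop :=
  ∀ j : Fin n, j ≤ c → σ j ≤ c

/-- Indices `i ≤ j` lie in the same section of `σ` if there is no cut point `c`
with `i ≤ c < j`. -/
def SameSection {n : ℕ} (σ : Equiv.Perm (Fin n)) (i j : Fin n) : Prop :=
  i ≤ j ∧ ∀ c : Fin n, i ≤ c → c < j → ¬ IsCutPoint σ c

/-- Unordered version of `SameSection`. -/
def InSameSection {n : ℕ} (σ : Equiv.Perm (Fin n)) (i j : Fin n) : Prop :=
  SameSection σ i j ∨ SameSection σ j i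

/-- `σ` is upper-canonical: for `i < j` with `σ(i) > i` and `σ(j) > j`, `σ(i) < σ(j)`. -/
def UpperCanonical {n : ℕ} (σ : Equiv.Perm (Fin n)) : Prop :=
  ∀ i j : Fin n, i < j → i < σ i → j < σ j → σ i < σ j

/-- `σ` is lower-canonical: for `i < j` with `σ(i) < i` and `σ(j) < j`, `σ(i) < σ(j)`. -/
def LowerCanonical {n : ℕ} (σ : Equiv.Perm (Fin n)) : Prop :=
  ∀ i j : Fin n, i < j → σ i < i → σ j < j → σ i < σ j

/-- `σ` is Strang canonical if it is both upper- and lower-canonical. -/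
def StrangCanonical {n : ℕ} (σ : Equiv.Perm (Fin n)) : Prop :=
  UpperCanonical σ ∧ LowerCanonical σ

/-- `σ` is row-settled: no indices `i < j` in the same section
with `σ(i) < i` (negative row) and `σ(j) > j` (positive row). -/
def RowSettled {n : ℕ} (σ : Equiv.Perm (Fin n)) : Prop :=
  ∀ i j : Fin n, i < j → SameSection σ i j → ¬ (σ i < i ∧ j < σ j)

/-- `σ` is settled if it is row-settled or column-settled
(column-settled means `σ⁻¹` is row-settled). -/
def Settled {n : ℕ} (σ : Equiv.Perm (Fin n)) : Prop :=
  RowSettled σ ∨ RowSettled σ⁻¹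

/-- The reducing permutation of `σ`: the product of the (pairwise disjoint)
transpositions `(i, i+1)` over all `i` with `σ(i) > i` and `σ(i+1) < i+1`. -/
def reducingPerm {n : ℕ} (σ : Equiv.Perm (Fin n)) : Equiv.Perm (Fin n) :=
  ((List.finRange n).filterMap fun i : Fin n =>
    if h : (i : ℕ) + 1 < n then
      let j : Fin n := ⟨(i : ℕ) + 1, h⟩
      if i < σ i ∧ σ j < j then some (Equiv.swap i j) else none
    else none).prod

/-- The reduction of `σ` is `σ` composed with its reducing permutation. -/
def reduction {n : ℕ} (σ : Equiv.Perm (Fin n)) : Equiv.Perm (Fin n) :=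
  σ * reducingPerm σ

/-- A bubblesort step for `σ`: a nonidentity permutation `t` that is a product of
pairwise disjoint adjacent transpositions `(i, i+1)`, each satisfying `σ(i) > σ(i+1)`. -/
def IsBubbleStep {n : ℕ} (σ t : Equiv.Perm (Fin n)) : Prop :=
  t ≠ 1 ∧ ∃ l : List (Fin n),
    l.Pairwise (fun i j => (i : ℕ) + 2 ≤ (j : ℕ)) ∧
    (∀ i ∈ l, ∃ h : (i : ℕ) + 1 < n, σ ⟨(i : ℕ) + 1, h⟩ < σ i) ∧
    t = (l.map fun i : Fin n =>
      (if h : (i : ℕ) + 1 < n then Equiv.swap i ⟨(i : ℕ) + 1, h⟩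
       else 1 : Equiv.Perm (Fin n))).prod

/-- The number of inversions of `σ`: pairs `i < j` with `σ(i) > σ(j)`. -/
def inversions {n : ℕ} (σ : Equiv.Perm (Fin n)) : ℕ :=
  (Finset.univ.filter fun p : Fin n × Fin n => p.1 < p.2 ∧ σ p.2 < σ p.1).card

/-- The cyclic shift by `s` on `{0,…,n-1}`: `i ↦ (i + s) mod n`. -/
def cyclicShift (n s : ℕ) : Equiv.Perm (Fin n) := (finRotate n) ^ s

/-!
Imagine a walker at every row `k` who has to reach `σ k`, moving one unit per time step once its
waiting time is over. If no two walkers ever share a position, each time step is a permutation of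
bandwidth at most `1`, and `σ` is the product of these steps. In a section of a row-settled
permutation the rows moving up precede those moving down; a walker waits until the rows between
it and this sign change have started. Walkers in the same direction stay ordered, as `σ` is Strang
canonical, and opposite walkers start at the right parity to swap places instead of colliding.
Every waiting time is less than the bandwidth `w`, so all walkers have arrived at time `2 * w - 1`.
The column-settled case follows by inverting.
-/

section Factorization

variable {n : ℕ} {σ : Equiv.Perm (Fin n)}

theorem bandwidth_le_iff {w : ℕ} :
    bandwidth σ ≤ w ↔ ∀ i, ((σ i : ℤ) - (i : ℤ)).natAbs ≤ w := by
  simp only [bandwidth, Finset.sup_le_iff, Finset.mem_univ, forall_const]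

theorem natAbs_apply_sub_le_bandwidth (σ : Equiv.Perm (Fin n)) (i : Fin n) :
    ((σ i : ℤ) - (i : ℤ)).natAbs ≤ bandwidth σ :=
  bandwidth_le_iff.1 le_rfl i

theorem bandwidth_inv_le (σ : Equiv.Perm (Fin n)) : bandwidth σ⁻¹ ≤ bandwidth σ := by
  refine bandwidth_le_iff.2 fun i => ?_
  have hle := natAbs_apply_sub_le_bandwidth σ (σ⁻¹ i)
  have hσ : σ (σ⁻¹ i) = i := σ.apply_symm_apply i
  rw [hσ] at hle
  omega

/-- `σ` is a product of at most `T` permutations of bandwidth at most `1`. -/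
def IsBandwidthOneProd (σ : Equiv.Perm (Fin n)) (T : ℕ) : Prop :=
  ∃ L : List (Equiv.Perm (Fin n)),
    L.length ≤ T ∧ (∀ τ ∈ L, bandwidth τ ≤ 1) ∧ L.prod = σ

namespace IsBandwidthOneProd

variable {T T' : ℕ}

theorem mono (h : IsBandwidthOneProd σ T) (hT : T ≤ T') : IsBandwidthOneProd σ T' :=
  let ⟨L, hlen, hL, hprod⟩ := h
  ⟨L, hlen.trans hT, hL, hprod⟩

theorem inv (h : IsBandwidthOneProd σ T) : IsBandwidthOneProd σ⁻¹ T := by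
  obtain ⟨L, hlen, hL, rfl⟩ := h
  refine ⟨(L.map (·⁻¹)).reverse, by simpa using hlen, fun τ hτ => ?_,
    (List.prod_inv_reverse L).symm⟩
  obtain ⟨ρ, hρ, rfl⟩ := List.mem_map.1 (List.mem_reverse.1 hτ)
  exact (bandwidth_inv_le ρ).trans (hL ρ hρ)

theorem of_path {π : ℕ → Equiv.Perm (Fin n)} (h0 : π 0 = 1)
    (hstep : ∀ t k, ((π (t + 1) k : ℤ) - (π t k : ℤ)).natAbs ≤ 1) (T : ℕ) :
    IsBandwidthOneProd (π T) T := by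
  induction T with
  | zero => exact ⟨[], by simp [h0]⟩
  | succ T ih =>
    obtain ⟨L, hlen, hL, hprod⟩ := ih
    refine ⟨(π (T + 1) * (π T)⁻¹) :: L, by simpa using hlen,
      List.forall_mem_cons.2 ⟨bandwidth_le_iff.2 fun i => ?_, hL⟩, by simp [hprod]⟩
    simpa using hstep T ((π T)⁻¹ i)

end IsBandwidthOneProd

/-- The position after `s` unit steps of a walker going from `a` to `b` and then staying there,
encoded as the point of `[a - s, a + s]` nearest to `b`. -/
def walk (a b : ℤ) (s : ℕ) : ℤ := max (a - s) (min (a + s) b)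

theorem walk_zero (a b : ℤ) : walk a b 0 = a := by
  unfold walk; omega

theorem walk_eq_target {a b : ℤ} {s : ℕ} (h : (b - a).natAbs ≤ s) : walk a b s = b := by
  unfold walk; omega

theorem min_le_walk (a b : ℤ) (s : ℕ) : min a b ≤ walk a b s := by
  unfold walk; omega

theorem walk_le_max (a b : ℤ) (s : ℕ) : walk a b s ≤ max a b := by
  unfold walk; omega

theorem natAbs_walk_sub_walk_le (a b : ℤ) {s s' : ℕ} (h : s ≤ s') (h' : s' ≤ s + 1) :
    (walk a b s' - walk a b s).natAbs ≤ 1 := by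
  unfold walk; omega

theorem exists_perm_eq_of_injective {p : Fin n → ℤ} (hp : Function.Injective p)
    (h0 : ∀ k, 0 ≤ p k) (hn : ∀ k, p k < n) :
    ∃ π : Equiv.Perm (Fin n), ∀ k, (π k : ℤ) = p k := by
  let f : Fin n → Fin n := fun k => ⟨(p k).toNat, (Int.toNat_lt (h0 k)).2 (hn k)⟩
  have hf : ∀ k, (f k : ℤ) = p k := fun k => Int.toNat_of_nonneg (h0 k)
  have hinj : Function.Injective f := fun k l h => hp (by rw [← hf, ← hf, h])
  exact ⟨Equiv.ofBijective f (Finite.injective_iff_bijective.1 hinj), hf⟩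

theorem isBandwidthOneProd_of_walk {d : Fin n → ℕ} {T : ℕ}
    (hinj : ∀ t, Function.Injective fun k : Fin n => walk k (σ k) (t - d k))
    (hT : ∀ k, d k + ((σ k : ℤ) - (k : ℤ)).natAbs ≤ T) : IsBandwidthOneProd σ T := by
  have hperm (t : ℕ) : ∃ π : Equiv.Perm (Fin n), ∀ k, (π k : ℤ) = walk k (σ k) (t - d k) := by
    refine exists_perm_eq_of_injective (hinj t) (fun k => ?_) fun k => ?_
    · exact (le_min k.val.cast_nonneg (σ k).val.cast_nonneg).trans (min_le_walk _ _ _)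
    · exact (walk_le_max _ _ _).trans_lt
        (max_lt (Int.ofNat_lt.2 k.isLt) (Int.ofNat_lt.2 (σ k).isLt))
  choose π hπ using hperm
  have h0 : π 0 = 1 := by
    ext k
    have := hπ 0 k
    rw [Nat.zero_sub, walk_zero] at this
    exact_mod_cast this
  have hend : π T = σ := by
    ext k
    have := hπ T k
    rw [walk_eq_target (Nat.le_sub_of_add_le' (hT k))] at this
    exact_mod_cast this
  rw [← hend]
  refine IsBandwidthOneProd.of_path h0 (fun t k => ?_) T
  rw [hπ, hπ]
  exact natAbs_walk_sub_walk_le _ _ (by omega) (by omega)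

end Factorization

section Canonical

variable {n : ℕ} {σ : Equiv.Perm (Fin n)}

theorem UpperCanonical.strictMonoOn (h : UpperCanonical σ) : StrictMonoOn σ {i | i < σ i} :=
  fun i hi j hj hij => h i j hij hi hj

theorem LowerCanonical.strictMonoOn (h : LowerCanonical σ) : StrictMonoOn σ {i | σ i < i} :=
  fun i hi j hj hij => h i j hij hi hj

theorem UpperCanonical.lowerCanonical_inv (h : UpperCanonical σ) : LowerCanonical σ⁻¹ := by
  intro i j hij hi hj
  refine (h.strictMonoOn.lt_iff_lt ?_ ?_).1 ?_ <;> simpa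

theorem LowerCanonical.upperCanonical_inv (h : LowerCanonical σ) : UpperCanonical σ⁻¹ := by
  intro i j hij hi hj
  refine (h.strictMonoOn.lt_iff_lt ?_ ?_).1 ?_ <;> simpa

theorem StrangCanonical.inv (h : StrangCanonical σ) : StrangCanonical σ⁻¹ :=
  ⟨h.2.upperCanonical_inv, h.1.lowerCanonical_inv⟩

theorem IsCutPoint.lt_apply {c k : Fin n} (hc : IsCutPoint σ c) (hk : c < k) : c < σ k := by
  have hsymm : Set.MapsTo σ.symm (Set.Iic c) (Set.Iic c) :=
    Equiv.Perm.perm_symm_mapsTo_of_mapsTo σ hc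
  by_contra! h
  have hkc := hsymm h
  rw [σ.symm_apply_apply] at hkc
  exact hk.not_ge hkc

theorem IsCutPoint.walk_lt_walk {c k l : Fin n} (hc : IsCutPoint σ c) (hk : k ≤ c) (hl : c < l)
    (s s' : ℕ) : walk k (σ k) s < walk l (σ l) s' := by
  have hσk := hc k hk
  have hσl := hc.lt_apply hl
  have hwalk_k := walk_le_max k (σ k) s
  have hwalk_l := min_le_walk l (σ l) s'
  omega

theorem RowSettled.exists_isCutPoint (h : RowSettled σ) {i j : Fin n} (hij : i < j)
    (hi : σ i < i) (hj : j < σ j) : ∃ c, IsCutPoint σ c ∧ i ≤ c ∧ c < j := by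
  by_contra! hno
  exact h i j hij ⟨hij.le, fun c hic hcj hc => (hno c hc hic).not_gt hcj⟩ ⟨hi, hj⟩

theorem exists_le_le_apply (σ : Equiv.Perm (Fin n)) (k : Fin n) : ∃ x ≤ k, k ≤ σ x := by
  by_contra! h
  have := Finset.card_le_card_of_injOn (s := Finset.Iic k) (t := Finset.Iio k) σ
    (fun x hx => by simpa using h x (by simpa using hx)) σ.injective.injOn
  rw [Fin.card_Iic, Fin.card_Iio] at this
  omega

theorem exists_ge_apply_le (σ : Equiv.Perm (Fin n)) (k : Fin n) : ∃ x ≥ k, σ x ≤ k := by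
  obtain ⟨x, hx, hkx⟩ := exists_le_le_apply σ⁻¹ k
  exact ⟨σ⁻¹ x, hkx, by simpa using hx⟩

end Canonical

/-- `b` is the last row with `b < σ b` in the block of rows around `k` on which the sign of
`σ x - x` is first positive and then negative. Only the rows between `k` and the sign change
from `b` to `b + 1` matter. -/
structure IsPeak {n : ℕ} (σ : Equiv.Perm (Fin n)) (k b : Fin n) : Prop where
  pos : ∀ x ≤ b, k ≤ x ∨ x = b → x < σ x
  neg : ∀ x > b, x ≤ k ∨ (x : ℕ) = b + 1 → σ x < x

/-- How long the walker starting at row `k` waits when the peak of `k` is `b`: the number of rows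
strictly between `k` and the sign change from `b` to `b + 1`. One of the two truncated differences
is always zero. -/
def delay {n : ℕ} (k b : Fin n) : ℕ := ((b : ℕ) - k) + (k - (b + 1))

section Peak

variable {n : ℕ} {σ : Equiv.Perm (Fin n)}

theorem exists_isPeak (hfree : ∀ i, σ i ≠ i) (k : Fin n) : ∃ b, IsPeak σ k b := by
  let S : Set (Fin n) := {x | x < σ x ∧ ∀ y, k ≤ y → y ≤ x → y < σ y}
  have : NeZero n := ⟨k.pos.ne'⟩
  have hzero : (0 : Fin n) < σ 0 := (Fin.pos_iff_ne_zero' _).2 (hfree 0)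
  have hS : S.Nonempty := ⟨0, hzero, fun y _ hy => by rwa [nonpos_iff_eq_zero.1 hy]⟩
  obtain ⟨b, ⟨hb, hkb⟩, hmax⟩ := S.exists_max_image id S.toFinite hS
  refine ⟨b, fun x hxb hx => ?_, fun x hbx hx => ?_⟩
  · rcases hx with hkx | rfl
    exacts [hkb x hkx hxb, hb]
  · refine (hfree x).lt_of_le <| le_of_not_gt fun hpos =>
      hbx.not_ge (hmax x ⟨hpos, fun y hky hyx => ?_⟩)
    rcases hyx.eq_or_lt with rfl | hyx
    · exact hpos
    · exact hkb y hky (by omega)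

namespace IsPeak

variable {k l b b' : Fin n}

theorem peak_pos (h : IsPeak σ k b) : b < σ b := h.pos b le_rfl (.inr rfl)

theorem le_of_pos (h : IsPeak σ k b) (hk : k < σ k) : k ≤ b :=
  le_of_not_gt fun hbk => (h.neg k hbk (.inl le_rfl)).not_gt hk

theorem lt_of_neg (h : IsPeak σ k b) (hk : σ k < k) : b < k :=
  lt_of_not_ge fun hkb => (h.pos k hkb (.inl le_rfl)).not_gt hk

theorem exists_succ (h : IsPeak σ k b) : ∃ m : Fin n, (m : ℕ) = b + 1 ∧ σ m < m := by
  have hb := h.peak_pos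
  have hm : (b : ℕ) + 1 < n := by omega
  exact ⟨⟨b + 1, hm⟩, rfl, h.neg _ (Fin.lt_def.2 (Nat.lt_succ_self b)) (.inr rfl)⟩

theorem mono (hk : IsPeak σ k b) (hl : IsPeak σ l b') (hkl : k ≤ l) : b ≤ b' := by
  by_contra! hlt
  obtain ⟨m, hm, hm_neg⟩ := hl.exists_succ
  have hmk : m < k := lt_of_not_ge fun hkm =>
    (hk.pos m (by omega) (.inl hkm)).not_gt hm_neg
  have hbk : b < k := hk.lt_of_neg (hl.neg k (by omega) (.inl hkl))
  exact (hl.neg b hlt (.inl (by omega))).not_gt hk.peak_pos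

theorem exists_isCutPoint (hrow : RowSettled σ) (hk : IsPeak σ k b) (hl : IsPeak σ l b')
    (hkl : k < l) (hlt : b < b') : ∃ c, IsCutPoint σ c ∧ k ≤ c ∧ c < l := by
  obtain ⟨m, hm, hm_neg⟩ := hk.exists_succ
  have hbm : b < m := by omega
  have hmb : m < b' := lt_of_le_of_ne (by omega) fun h =>
    hm_neg.not_gt (h ▸ hl.peak_pos)
  have hml : m < l := lt_of_not_ge fun hlm => hm_neg.not_gt (hl.pos m hmb.le (.inl hlm))
  have hkb : k < b' := lt_of_not_ge fun hbk => (hk.neg b' hlt (.inl hbk)).not_gt hl.peak_pos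
  have hneg : σ (max k m) < max k m :=
    hk.neg _ (hbm.trans_le (le_max_right k m))
      ((max_choice k m).imp Eq.le fun h => (congrArg Fin.val h).trans hm)
  have hpos : min l b' < σ (min l b') :=
    hl.pos _ (min_le_right l b') ((min_choice l b').imp Eq.ge id)
  obtain ⟨c, hc, hkmc, hclb⟩ :=
    hrow.exists_isCutPoint (max_lt (lt_min hkl hkb) (lt_min hml hmb)) hneg hpos
  exact ⟨c, hc, (le_max_left k m).trans hkmc, hclb.trans_le (min_le_left l b')⟩

theorem delay_lt_bandwidth (hfree : ∀ i, σ i ≠ i) (h : IsPeak σ k b) :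
    delay k b < bandwidth σ := by
  rcases (hfree k).lt_or_gt with hk | hk
  · obtain ⟨x, hxk, hkx⟩ := exists_le_le_apply σ k
    have hbk := h.lt_of_neg hk
    have hxb : x ≤ b := le_of_not_gt fun hbx => (h.neg x hbx (.inl hxk)).not_ge (hxk.trans hkx)
    have := natAbs_apply_sub_le_bandwidth σ x
    unfold delay
    omega
  · obtain ⟨x, hkx, hxk⟩ := exists_ge_apply_le σ k
    have hkb := h.le_of_pos hk
    have hbx : b < x := lt_of_not_ge fun hxb => (h.pos x hxb (.inl hkx)).not_ge (hxk.trans hkx)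
    have := natAbs_apply_sub_le_bandwidth σ x
    unfold delay
    omega

end IsPeak

end Peak

section Collision

variable {n : ℕ} {σ : Equiv.Perm (Fin n)} {k l b : Fin n}

theorem apply_lt_of_crossing (hfree : ∀ i, σ i ≠ i) (hsc : StrangCanonical σ)
    (hk : IsPeak σ k b) (hkb : k ≤ b) (hbl : b < l) (hl : σ l < l) (hcross : σ l < σ k) :
    (σ l : ℕ) + b < k + l := by
  have hmaps : ∀ x ∈ Finset.Icc k b ∪ Finset.Ioi l, σ x ∈ Finset.Ioi (σ l) := by
    simp only [Finset.mem_union, Finset.mem_Icc, Finset.mem_Ioi]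
    rintro x (⟨hkx, hxb⟩ | hlx)
    · exact hcross.trans_le (hsc.1.strictMonoOn.monotoneOn (hk.pos k hkb (.inl le_rfl))
        (hk.pos x hxb (.inl hkx)) hkx)
    · rcases (hfree x).lt_or_gt with hx | hx
      · exact hsc.2 l x hlx hl hx
      · exact hl.trans (hlx.trans hx)
  have hdisj : Disjoint (Finset.Icc k b) (Finset.Ioi l) :=
    Finset.disjoint_left.2 fun x hx hlx =>
      ((Finset.mem_Icc.1 hx).2.trans_lt hbl).not_gt (Finset.mem_Ioi.1 hlx)
  have hcard := Finset.card_le_card_of_injOn σ hmaps σ.injective.injOn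
  rw [Finset.card_union_of_disjoint hdisj, Fin.card_Icc, Fin.card_Ioi, Fin.card_Ioi] at hcard
  omega

theorem le_apply_of_crossing (hfree : ∀ i, σ i ≠ i) (hsc : StrangCanonical σ)
    (hl : IsPeak σ l b) (hkb : k ≤ b) (hbl : b < l) (hk : k < σ k) (hcross : σ l < σ k) :
    (k : ℕ) + l ≤ σ k + b := by
  have hmaps : ∀ x ∈ Finset.Iio k ∪ Finset.Ioc b l, σ x ∈ Finset.Iio (σ k) := by
    simp only [Finset.mem_union, Finset.mem_Ioc, Finset.mem_Iio]
    rintro x (hxk | ⟨hbx, hxl⟩)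
    · rcases (hfree x).lt_or_gt with hx | hx
      · exact hx.trans (hxk.trans hk)
      · exact hsc.1 x k hxk hx hk
    · exact (hsc.2.strictMonoOn.monotoneOn (hl.neg x hbx (.inl hxl))
        (hl.neg l hbl (.inl le_rfl)) hxl).trans_lt hcross
  have hdisj : Disjoint (Finset.Iio k) (Finset.Ioc b l) :=
    Finset.disjoint_left.2 fun x hxk hx =>
      ((Finset.mem_Iio.1 hxk).trans_le hkb).not_gt (Finset.mem_Ioc.1 hx).1
  have hcard := Finset.card_le_card_of_injOn σ hmaps σ.injective.injOn
  rw [Finset.card_union_of_disjoint hdisj, Fin.card_Iio, Fin.card_Ioc, Fin.card_Iio] at hcard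
  omega

theorem walk_ne_walk_of_pos_of_neg (hfree : ∀ i, σ i ≠ i) (hsc : StrangCanonical σ)
    (hk : IsPeak σ k b) (hl : IsPeak σ l b) (hk_pos : k < σ k) (hl_neg : σ l < l) (t : ℕ) :
    walk k (σ k) (t - delay k b) ≠ walk l (σ l) (t - delay l b) := by
  have hkb := hk.le_of_pos hk_pos
  have hbl := hl.lt_of_neg hl_neg
  unfold walk delay
  rcases lt_or_ge (σ k) (σ l) with hlt | hge
  · omega
  · have hcross : σ l < σ k := hge.lt_of_ne' (σ.injective.ne (hkb.trans_lt hbl).ne)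
    -- The walkers swap places across the edge from `k + l - b - 1` to `k + l - b` in the step
    -- ending at time `l - k`; by the two bounds neither of them has stopped before.
    have hσl := apply_lt_of_crossing hfree hsc hk hkb hbl hl_neg hcross
    have hσk := le_apply_of_crossing hfree hsc hl hkb hbl hk_pos hcross
    omega

theorem walk_ne_walk_of_isPeak (hfree : ∀ i, σ i ≠ i) (hsc : StrangCanonical σ)
    (hk : IsPeak σ k b) (hl : IsPeak σ l b) (hkl : k < l) (t : ℕ) :
    walk k (σ k) (t - delay k b) ≠ walk l (σ l) (t - delay l b) := by
  rcases (hfree k).lt_or_gt with hσk | hσk <;> rcases (hfree l).lt_or_gt with hσl | hσl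
  · have hlt := hsc.2 k l hkl hσk hσl
    have hbk := hk.lt_of_neg hσk
    unfold walk delay
    omega
  · exact absurd (hl.le_of_pos hσl) ((hk.lt_of_neg hσk).trans hkl).not_ge
  · exact walk_ne_walk_of_pos_of_neg hfree hsc hk hl hσk hσl t
  · have hlt := hsc.1 k l hkl hσk hσl
    have hlb := hl.le_of_pos hσl
    unfold walk delay
    omega

theorem injective_walk_delay (hfree : ∀ i, σ i ≠ i) (hrow : RowSettled σ) (hsc : StrangCanonical σ)
    {peak : Fin n → Fin n} (hpeak : ∀ k, IsPeak σ k (peak k)) (t : ℕ) :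
    Function.Injective fun k : Fin n => walk k (σ k) (t - delay k (peak k)) := by
  refine Function.Injective.of_lt_imp_ne fun k l hkl => ?_
  rcases ((hpeak k).mono (hpeak l) hkl.le).eq_or_lt with heq | hlt
  · have hl := heq ▸ hpeak l
    rw [← heq]
    exact walk_ne_walk_of_isPeak hfree hsc (hpeak k) hl hkl t
  · obtain ⟨c, hc, hkc, hcl⟩ := (hpeak k).exists_isCutPoint hrow (hpeak l) hkl hlt
    exact (hc.walk_lt_walk hkc hcl _ _).ne

theorem RowSettled.isBandwidthOneProd (hrow : RowSettled σ) (hfree : ∀ i, σ i ≠ i)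
    (hsc : StrangCanonical σ) : IsBandwidthOneProd σ (2 * bandwidth σ - 1) := by
  choose peak hpeak using exists_isPeak hfree
  refine isBandwidthOneProd_of_walk (injective_walk_delay hfree hrow hsc hpeak) fun k => ?_
  have hdelay := (hpeak k).delay_lt_bandwidth hfree
  have hdist := natAbs_apply_sub_le_bandwidth σ k
  omega

end Collision

/-- A fixed-point-free settled Strang canonical permutation of bandwidth `w`
is a product of at most `2w - 1` permutations of bandwidth at most 1. -/
theorem stmt_2 (n : ℕ) (σ : Equiv.Perm (Fin n))
    (hfree : ∀ i : Fin n, σ i ≠ i)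
    (hsettled : Settled σ) (hsc : StrangCanonical σ) :
    ∃ L : List (Equiv.Perm (Fin n)),
      L.length ≤ 2 * bandwidth σ - 1 ∧ (∀ τ ∈ L, bandwidth τ ≤ 1) ∧ L.prod = σ := by
  rcases hsettled with hrow | hcol
  · exact hrow.isBandwidthOneProd hfree hsc
  · have hfree_inv : ∀ i, σ⁻¹ i ≠ i := fun i hi => hfree i (Equiv.Perm.inv_eq_iff_eq.1 hi).symm
    have hw : 2 * bandwidth σ⁻¹ - 1 ≤ 2 * bandwidth σ - 1 := by
      have := bandwidth_inv_le σ
      omega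
    have hinv := (hcol.isBandwidthOneProd hfree_inv hsc.inv).inv
    rw [inv_inv] at hinv
    exact hinv.mono hw
end

section
/- Let σ be a fixed-point-free row-settled Strang canonical permutation of {1,…,n} (n ≥ 2) that has no cut point c with c < n (i.e., {1,…,n} is a single section), and set m = σ⁻¹(n). Then the number of iterations of the reduction map needed to bring σ to the identity equals max over 1 ≤ i ≤ m of (σ(i) + m − 2i), and this also equals max over m < i ≤ n of (2i − m − 1 − σ(i)). -/
/-!
Follow each row `i` of `σ`, carrying its value `σ i`, through the reductions. The positive rows of
`σ` are the initial ones `i < k`, where `k = m + 1`, and the negative rows are the others. Row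
`i < k` waits until the rows between it and `k` have started, that is for `k - 1 - i` steps, and
then moves one place to the right at every step until it reaches its place `σ i`: whatever
stands immediately to its right has to be a negative row that has not arrived. Negative rows behave
in the mirror-image way. So `i < k` arrives at time `(k - 1 - i) + (σ i - i)`, and once all the
positive rows have arrived no value lies to the left of its place, which forces the identity.
-/

section General

variable {α : Type*}

theorem isGreatest_of_pred_notMem_upperBounds [LinearOrder α] [PredOrder α] {S : Set α} {a : α}
    (ha : a ∈ upperBounds S) (ha' : Order.pred a ∉ upperBounds S) : IsGreatest S a := by
  obtain ⟨b, hb, hab⟩ : ∃ b ∈ S, Order.pred a < b := by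
    simpa only [mem_upperBounds, not_forall, not_le, exists_prop] using ha'
  exact ⟨(ha hb).antisymm (Order.le_of_pred_lt hab) ▸ hb, ha⟩

theorem perm_eq_one_of_apply_le [PartialOrder α] [WellFoundedLT α] {τ : Equiv.Perm α}
    (h : ∀ x, τ x ≤ x) : τ = 1 := by
  ext x
  induction x using WellFoundedLT.induction with
  | ind x ih =>
    by_contra hne
    exact hne (τ.injective (ih _ ((h x).lt_of_ne hne)))

theorem exists_gt_perm_apply_le [LinearOrder α] [Finite α] (τ : Equiv.Perm α) {c p : α}
    (hp : p ≤ c) (hτp : c < τ p) : ∃ x, c < x ∧ τ x ≤ c := by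
  by_contra! hmaps
  have : c < τ.symm (τ p) := Equiv.Perm.perm_symm_on_of_perm_on_finite hmaps hτp
  exact hp.not_gt (by simpa using this)

end General

section ReducingPerm

variable {n : ℕ} {σ : Equiv.Perm (Fin n)} {i j x : Fin n}

/-- `(i, j)` is one of the transpositions `(i, i + 1)` whose product is `reducingPerm σ`. -/
def IsReducingPair (σ : Equiv.Perm (Fin n)) (i j : Fin n) : Prop :=
  (j : ℕ) = i + 1 ∧ i < σ i ∧ σ j < j

theorem IsReducingPair.ne (h : IsReducingPair σ i j) : i ≠ j := by
  rintro rfl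
  exact lt_asymm h.2.1 h.2.2

theorem IsReducingPair.disjoint_swap {i' j' : Fin n} (h : IsReducingPair σ i j)
    (h' : IsReducingPair σ i' j') (hne : i ≠ i') :
    (Equiv.swap i j).Disjoint (Equiv.swap i' j') := by
  have hij' : i ≠ j' := by rintro rfl; exact lt_asymm h.2.1 h'.2.2
  have hji' : j ≠ i' := by rintro rfl; exact lt_asymm h'.2.1 h.2.2
  have hjj' : j ≠ j' := by rintro rfl; exact hne (Fin.ext (by have := h.1; have := h'.1; omega))
  apply Equiv.Perm.disjoint_swap_swap
  simp [h.ne, h'.ne, hne, hij', hji', hjj']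

theorem exists_reducingPerm_eq_prod (σ : Equiv.Perm (Fin n)) :
    ∃ l : List (Equiv.Perm (Fin n)), reducingPerm σ = l.prod ∧
      l.Pairwise Equiv.Perm.Disjoint ∧
      ∀ f, f ∈ l ↔ ∃ i j, IsReducingPair σ i j ∧ f = Equiv.swap i j := by
  refine ⟨_, rfl, ?_, fun f ↦ ?_⟩
  · refine List.pairwise_filterMap.2 ((List.nodup_finRange n).imp fun {i i'} hne f hf f' hf' ↦ ?_)
    simp only [Option.dite_none_right_eq_some, Option.ite_none_right_eq_some,
      Option.some.injEq] at hf hf'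
    obtain ⟨hi, hpair, rfl⟩ := hf
    obtain ⟨hi', hpair', rfl⟩ := hf'
    exact IsReducingPair.disjoint_swap ⟨rfl, hpair⟩ ⟨rfl, hpair'⟩ hne
  · simp only [List.mem_filterMap, List.mem_finRange, true_and, Option.dite_none_right_eq_some,
      Option.ite_none_right_eq_some, Option.some.injEq]
    constructor
    · rintro ⟨i, hi, hpair, rfl⟩
      exact ⟨i, _, ⟨rfl, hpair⟩, rfl⟩
    · rintro ⟨i, ⟨j, hjn⟩, ⟨rfl, hpair⟩, rfl⟩
      exact ⟨i, hjn, hpair, rfl⟩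

theorem IsReducingPair.swap_apply_eq_reducingPerm_apply (h : IsReducingPair σ i j)
    (hx : x = i ∨ x = j) : Equiv.swap i j x = reducingPerm σ x := by
  obtain ⟨l, hprod, hdisj, hmem⟩ := exists_reducingPerm_eq_prod σ
  rw [hprod]
  refine Equiv.Perm.eq_on_support_mem_disjoint ((hmem _).2 ⟨i, j, h, rfl⟩) hdisj x ?_
  exact Equiv.Perm.mem_support.2 (Equiv.swap_apply_ne_self_iff.2 ⟨h.ne, hx⟩)

theorem IsReducingPair.reducingPerm_apply_left (h : IsReducingPair σ i j) :
    reducingPerm σ i = j := by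
  rw [← h.swap_apply_eq_reducingPerm_apply (.inl rfl), Equiv.swap_apply_left]

theorem IsReducingPair.reducingPerm_apply_right (h : IsReducingPair σ i j) :
    reducingPerm σ j = i := by
  rw [← h.swap_apply_eq_reducingPerm_apply (.inr rfl), Equiv.swap_apply_right]

theorem reducingPerm_apply_of_forall_not (hleft : ∀ j, ¬ IsReducingPair σ x j)
    (hright : ∀ i, ¬ IsReducingPair σ i x) : reducingPerm σ x = x := by
  obtain ⟨l, hprod, -, hmem⟩ := exists_reducingPerm_eq_prod σ
  by_contra hne
  rw [hprod, ← ne_eq, ← Equiv.Perm.mem_support] at hne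
  obtain ⟨f, hf, hxf⟩ := Equiv.Perm.exists_mem_support_of_mem_support_prod hne
  obtain ⟨i, j, hij, rfl⟩ := (hmem f).1 hf
  rcases (Equiv.swap_apply_ne_self_iff.1 (Equiv.Perm.mem_support.1 hxf)).2 with rfl | rfl
  · exact hleft j hij
  · exact hright i hij

theorem reducingPerm_apply_of_fixed (hx : σ x = x) : reducingPerm σ x = x :=
  reducingPerm_apply_of_forall_not (fun _ h ↦ h.2.1.ne' hx) fun _ h ↦ h.2.2.ne hx

@[simp]
theorem reducingPerm_reducingPerm_apply (σ : Equiv.Perm (Fin n)) (x : Fin n) :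
    reducingPerm σ (reducingPerm σ x) = x := by
  by_cases hleft : ∃ j, IsReducingPair σ x j
  · obtain ⟨j, h⟩ := hleft
    rw [h.reducingPerm_apply_left, h.reducingPerm_apply_right]
  by_cases hright : ∃ i, IsReducingPair σ i x
  · obtain ⟨i, h⟩ := hright
    rw [h.reducingPerm_apply_right, h.reducingPerm_apply_left]
  push Not at hleft hright
  simp only [reducingPerm_apply_of_forall_not hleft hright]

theorem reduction_symm_apply (σ : Equiv.Perm (Fin n)) (x : Fin n) :
    (reduction σ).symm x = reducingPerm σ (σ.symm x) := by
  rw [Equiv.symm_apply_eq]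
  simp [reduction]

end ReducingPerm

section RevConj

variable {n : ℕ}

/-- The permutation `σ` read from right to left, that is its conjugate by `i ↦ n - 1 - i`. It
exchanges the positive and the negative rows of `σ`. -/
def revConj (σ : Equiv.Perm (Fin n)) : Equiv.Perm (Fin n) :=
  Fin.revPerm.permCongr σ

variable (σ : Equiv.Perm (Fin n)) (i : Fin n)

@[simp]
theorem revConj_apply : revConj σ i = (σ i.rev).rev := rfl

@[simp]
theorem revConj_symm_apply : (revConj σ).symm i = (σ.symm i.rev).rev := rfl

@[simp]
theorem revConj_revConj : revConj (revConj σ) = σ := by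
  ext; simp

variable {σ}

theorem revConj_eq_one_iff : revConj σ = 1 ↔ σ = 1 :=
  map_eq_one_iff Fin.revPerm.permCongrHom Fin.revPerm.permCongrHom.injective

theorem IsReducingPair.revConj {i j : Fin n} (h : IsReducingPair σ i j) :
    IsReducingPair (revConj σ) j.rev i.rev := by
  obtain ⟨hj, hi, hj'⟩ := h
  refine ⟨?_, by simpa using hj', by simpa using hi⟩
  simp only [Fin.val_rev]
  omega

variable (σ)

theorem reducingPerm_revConj : reducingPerm (revConj σ) = revConj (reducingPerm σ) := by
  refine Equiv.ext fun x ↦ ?_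
  rw [revConj_apply]
  by_cases hleft : ∃ j, IsReducingPair (revConj σ) x j
  · obtain ⟨j, h⟩ := hleft
    have h' : IsReducingPair σ j.rev x.rev := by simpa using h.revConj
    rw [h.reducingPerm_apply_left, h'.reducingPerm_apply_right, Fin.rev_rev]
  by_cases hright : ∃ i, IsReducingPair (revConj σ) i x
  · obtain ⟨i, h⟩ := hright
    have h' : IsReducingPair σ x.rev i.rev := by simpa using h.revConj
    rw [h.reducingPerm_apply_right, h'.reducingPerm_apply_left, Fin.rev_rev]
  push Not at hleft hright
  rw [reducingPerm_apply_of_forall_not hleft hright, reducingPerm_apply_of_forall_not, Fin.rev_rev]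
  · exact fun j h ↦ hright j.rev (by simpa using h.revConj)
  · exact fun i h ↦ hleft i.rev (by simpa using h.revConj)

theorem semiconj_revConj_reduction :
    Function.Semiconj (revConj (n := n)) reduction reduction := fun σ ↦ by
  rw [reduction, reduction, reducingPerm_revConj]
  exact map_mul Fin.revPerm.permCongrHom σ (reducingPerm σ)

end RevConj

/-- The rows `i < k` of `σ` are positive, the others are negative, and `σ` is increasing on both
blocks. The threshold is a natural number, so that reversal is `k ↦ n - k`. -/
structure IsSplitAt {n : ℕ} (σ : Equiv.Perm (Fin n)) (k : ℕ) : Prop where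
  le : k ≤ n
  lt_apply : ∀ i : Fin n, (i : ℕ) < k → i < σ i
  apply_lt : ∀ i : Fin n, k ≤ i → σ i < i
  apply_lt_apply_of_lt : ∀ i j : Fin n, i < j → (j : ℕ) < k → σ i < σ j
  apply_lt_apply_of_le : ∀ i j : Fin n, i < j → k ≤ i → σ i < σ j

/-- The place after `t` reductions of the row `i` of value `s`, where the positive rows are those
before `k`. A row `i < k` is free to move from time `k - 1 - i` on, so that it has reached
`i + (t - (k - 1 - i))` unless it is still at `i` or has arrived at `s`; a row `i ≥ k` is free to
move from time `i - k` on. In both cases truncated subtraction only affects rows that have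
not moved or have arrived. -/
def rowPosition (k t i s : ℕ) : ℕ :=
  if i < k then max i (min s (2 * i + 1 + t - k)) else max s (min i (2 * i - k - t))

/-- After `t` reductions have turned `σ` into `τ`, every row stands where `rowPosition` says. -/
def HasRowPositions {n : ℕ} (σ : Equiv.Perm (Fin n)) (k t : ℕ) (τ : Equiv.Perm (Fin n)) : Prop :=
  ∀ i, (τ.symm (σ i) : ℕ) = rowPosition k t i (σ i)

section RowPosition

variable {k t i j s s' : ℕ}

theorem rowPosition_of_lt (hi : i < k) :
    rowPosition k t i s = max i (min s (2 * i + 1 + t - k)) := if_pos hi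

theorem rowPosition_of_le (hi : k ≤ i) :
    rowPosition k t i s = max s (min i (2 * i - k - t)) := if_neg hi.not_gt

theorem rowPosition_zero (hs : k ≤ i → s ≤ i) : rowPosition k 0 i s = i := by
  unfold rowPosition
  split_ifs <;> omega

theorem rowPosition_le (hi : i < k) (hs : i < s) : rowPosition k t i s ≤ s := by
  rw [rowPosition_of_lt hi]
  omega

theorem le_rowPosition (hi : k ≤ i) : s ≤ rowPosition k t i s := by
  rw [rowPosition_of_le hi]
  omega

theorem rowPosition_eq_self_iff (hi : i < k) (hs : i < s) :
    rowPosition k t i s = s ↔ s + k ≤ 2 * i + 1 + t := by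
  rw [rowPosition_of_lt hi]
  omega

theorem rowPosition_lt_rowPosition (hi : k ≤ i) (hij : i < j) (hs : s < s') :
    rowPosition k t i s < rowPosition k t j s' := by
  rw [rowPosition_of_le hi, rowPosition_of_le (hi.trans hij.le)]
  omega

-- While it is free to move, a positive row is at `2 * i + 1 + t - k`, so two of them differ by two.
theorem rowPosition_ne_add_one (hi : i < k) (hj : j < k) (hmoving : k ≤ i + 1 + t)
    (hs : rowPosition k t i s < s) (hlt : i < j → s < s') (hgt : j < i → s' < s) :
    rowPosition k t j s' ≠ rowPosition k t i s + 1 := by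
  rw [rowPosition_of_lt hi] at *
  rw [rowPosition_of_lt hj]
  rcases lt_trichotomy i j with hij | rfl | hij
  · have := hlt hij
    omega
  · omega
  · have := hgt hij
    omega

end RowPosition

section RowPositions

variable {n : ℕ} {σ τ : Equiv.Perm (Fin n)} {k t : ℕ}

theorem IsSplitAt.revConj (hσ : IsSplitAt σ k) : IsSplitAt (revConj σ) (n - k) where
  le := Nat.sub_le n k
  lt_apply i hi := Fin.lt_rev_iff.2 (hσ.apply_lt i.rev (by rw [Fin.val_rev]; omega))
  apply_lt i hi := Fin.rev_lt_iff.2 (hσ.lt_apply i.rev (by rw [Fin.val_rev]; omega))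
  apply_lt_apply_of_lt i j hij hj := Fin.rev_lt_rev.2 <|
    hσ.apply_lt_apply_of_le j.rev i.rev (Fin.rev_lt_rev.2 hij) (by rw [Fin.val_rev]; omega)
  apply_lt_apply_of_le i j hij hi := Fin.rev_lt_rev.2 <|
    hσ.apply_lt_apply_of_lt j.rev i.rev (Fin.rev_lt_rev.2 hij) (by rw [Fin.val_rev]; omega)

theorem IsSplitAt.rowPosition_rev (hσ : IsSplitAt σ k) (i : Fin n) :
    rowPosition (n - k) t i.rev (σ i).rev + rowPosition k t i (σ i) + 1 = n := by
  have hk := hσ.le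
  have hpos := hσ.lt_apply i
  have hneg := hσ.apply_lt i
  unfold rowPosition
  simp only [Fin.val_rev]
  split_ifs <;> omega

namespace HasRowPositions

theorem revConj (h : HasRowPositions σ k t τ) (hσ : IsSplitAt σ k) :
    HasRowPositions (revConj σ) (n - k) t (revConj τ) := fun i ↦ by
  have hrev := hσ.rowPosition_rev (t := t) i.rev
  rw [Fin.rev_rev, ← h i.rev] at hrev
  rw [revConj_symm_apply, revConj_apply, Fin.rev_rev, Fin.val_rev]
  omega

theorem zero (hσ : IsSplitAt σ k) : HasRowPositions σ k 0 σ := fun i ↦ by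
  rw [Equiv.symm_apply_apply, rowPosition_zero fun hi ↦ (hσ.apply_lt i hi).le]

theorem exists_row (h : HasRowPositions σ k t τ) (x : Fin n) :
    ∃ i, τ x = σ i ∧ (x : ℕ) = rowPosition k t i (σ i) := by
  refine ⟨σ.symm (τ x), by simp, ?_⟩
  rw [← h, Equiv.apply_symm_apply, Equiv.symm_apply_apply]

theorem reducingPerm_apply_of_not_started (h : HasRowPositions σ k t τ) (hσ : IsSplitAt σ k)
    {i : Fin n} (hi : i + 1 + t < k) (hτi : τ i = σ i) : reducingPerm τ i = i := by
  have hpos : i < τ i := hτi ▸ hσ.lt_apply i (by omega)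
  refine reducingPerm_apply_of_forall_not ?_ fun j hji ↦ lt_asymm hpos hji.2.2
  rintro y ⟨hy, -, hyneg⟩
  obtain ⟨j, hyj, hyposition⟩ := h.exists_row y
  rcases lt_or_ge (j : ℕ) k with hj | hj
  · have := rowPosition_le (t := t) hj (hσ.lt_apply j hj)
    omega
  · rw [rowPosition_of_le hj] at hyposition
    omega

theorem le_of_next_to_moving (h : HasRowPositions σ k t τ) (hσ : IsSplitAt σ k) {i j x y : Fin n}
    (hi : (i : ℕ) < k) (hmoving : k ≤ i + 1 + t) (hx : τ x = σ i) (hxs : x < τ x)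
    (hxy : (y : ℕ) = x + 1) (hy : τ y = σ j) : k ≤ j := by
  by_contra! hj
  have hxi : (x : ℕ) = rowPosition k t i (σ i) := by rw [← h, ← hx, Equiv.symm_apply_apply]
  have hyj : (y : ℕ) = rowPosition k t j (σ j) := by rw [← h, ← hy, Equiv.symm_apply_apply]
  refine rowPosition_ne_add_one hi hj hmoving (s := σ i) (s' := σ j) ?_
    (fun hij ↦ hσ.apply_lt_apply_of_lt i j hij hj)
    (fun hji ↦ hσ.apply_lt_apply_of_lt j i hji hi) ?_
  all_goals omega

-- If a negative row has arrived at `y` and a larger value stands to its left, then some smaller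
-- value stands to its right; it too belongs to a negative row, although these never change order.
theorem apply_le_of_apply_eq_self (h : HasRowPositions σ k t τ) (hσ : IsSplitAt σ k)
    {j x y : Fin n} (hj : k ≤ j) (hyj : τ y = σ j) (hy : τ y = y) (hxy : x < y) : τ x ≤ y := by
  by_contra! hcross
  obtain ⟨z, hyz, hz⟩ := exists_gt_perm_apply_le τ hxy.le hcross
  obtain ⟨w, hzw, hzposition⟩ := h.exists_row z
  have hw : k ≤ w := by
    by_contra! hw
    have := rowPosition_le (t := t) hw (hσ.lt_apply w hw)
    omega
  have hvalue : σ w < σ j := by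
    rw [← hzw, ← hyj, hy]
    exact hz.lt_of_ne fun hzy ↦ hyz.ne (τ.injective (hy.trans hzy.symm))
  have hwj : w < j := by
    by_contra! hjw
    rcases hjw.eq_or_lt with rfl | hjw
    · exact hvalue.false
    · exact hvalue.asymm (hσ.apply_lt_apply_of_le j w hjw hj)
  have hposition := rowPosition_lt_rowPosition (t := t) hw hwj hvalue
  rw [← hzposition, ← h j, ← hyj, Equiv.symm_apply_apply] at hposition
  exact hposition.asymm hyz

theorem exists_isReducingPair (h : HasRowPositions σ k t τ) (hσ : IsSplitAt σ k) {i x : Fin n}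
    (hi : (i : ℕ) < k) (hmoving : k ≤ i + 1 + t) (hx : τ x = σ i) (hxs : x < τ x) :
    ∃ y, IsReducingPair τ x y := by
  obtain ⟨y, hxy⟩ : ∃ y : Fin n, (y : ℕ) = x + 1 := ⟨⟨x + 1, by omega⟩, rfl⟩
  obtain ⟨j, hyj, hyposition⟩ := h.exists_row y
  have hj : k ≤ j := h.le_of_next_to_moving hσ hi hmoving hx hxs hxy hyj
  have hyle : τ y ≤ y := by
    rw [hyj, Fin.le_def, hyposition]
    exact le_rowPosition hj
  have hyne : τ y ≠ y := fun hy ↦ by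
    have hτxy : τ x ≤ τ y := by
      rw [hy]
      exact h.apply_le_of_apply_eq_self hσ hj hyj hy (by omega)
    have : τ x ≠ τ y := fun heq ↦ by have := τ.injective heq; omega
    omega
  exact ⟨y, hxy, hxs, hyle.lt_of_ne hyne⟩

theorem reduction_symm_apply_of_lt (h : HasRowPositions σ k t τ) (hσ : IsSplitAt σ k) {i : Fin n}
    (hi : (i : ℕ) < k) :
    ((reduction τ).symm (σ i) : ℕ) = rowPosition k (t + 1) i (σ i) := by
  have hpos : i < σ i := hσ.lt_apply i hi
  obtain ⟨x, hx⟩ : ∃ x, τ x = σ i := τ.surjective (σ i)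
  have hxposition : (x : ℕ) = rowPosition k t i (σ i) := by
    rw [← h, ← hx, Equiv.symm_apply_apply]
  rw [reduction_symm_apply, ← hx, Equiv.symm_apply_apply, hx, rowPosition_of_lt hi]
  rw [rowPosition_of_lt hi] at hxposition
  rcases lt_or_ge (i + 1 + t : ℕ) k with hwaiting | hmoving
  · obtain rfl : x = i := by omega
    rw [h.reducingPerm_apply_of_not_started hσ hwaiting hx]
    omega
  rcases (show x ≤ σ i by omega).eq_or_lt with harrived | hxs
  · rw [reducingPerm_apply_of_fixed (hx.trans harrived.symm)]
    omega
  · obtain ⟨y, hxy⟩ := h.exists_isReducingPair hσ hi hmoving hx (hx ▸ hxs)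
    rw [hxy.reducingPerm_apply_left, hxy.1]
    omega

theorem reduction (h : HasRowPositions σ k t τ) (hσ : IsSplitAt σ k) :
    HasRowPositions σ k (t + 1) (reduction τ) := fun i ↦ by
  rcases lt_or_ge (i : ℕ) k with hi | hi
  · exact h.reduction_symm_apply_of_lt hσ hi
  · have hi' : (i.rev : ℕ) < n - k := by rw [Fin.val_rev]; omega
    have hrev := (h.revConj hσ).reduction_symm_apply_of_lt hσ.revConj hi'
    rw [← semiconj_revConj_reduction τ, revConj_symm_apply, revConj_apply, Fin.rev_rev,
      Fin.rev_rev, Fin.val_rev] at hrev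
    have := hσ.rowPosition_rev (t := t + 1) i
    omega

theorem eq_one_iff (h : HasRowPositions σ k t τ) (hσ : IsSplitAt σ k) :
    τ = 1 ↔ ∀ i : Fin n, (i : ℕ) < k → (σ i + k : ℕ) ≤ 2 * i + 1 + t := by
  refine ⟨?_, fun harrived ↦ perm_eq_one_of_apply_le fun x ↦ ?_⟩
  · rintro rfl i hi
    exact (rowPosition_eq_self_iff hi (hσ.lt_apply i hi)).1 (h i).symm
  obtain ⟨i, hxi, hx⟩ := h.exists_row x
  rw [hxi, Fin.le_def, hx]
  rcases lt_or_ge (i : ℕ) k with hi | hi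
  · exact ((rowPosition_eq_self_iff hi (hσ.lt_apply i hi)).2 (harrived i hi)).ge
  · exact le_rowPosition hi

end HasRowPositions

namespace IsSplitAt

theorem hasRowPositions_iterate (hσ : IsSplitAt σ k) (t : ℕ) :
    HasRowPositions σ k t (reduction^[t] σ) := by
  induction t with
  | zero => exact .zero hσ
  | succ t ih =>
    rw [Function.iterate_succ_apply']
    exact ih.reduction hσ

theorem iterate_reduction_eq_one_iff_forall_lt (hσ : IsSplitAt σ k) (t : ℕ) :
    reduction^[t] σ = 1 ↔ ∀ i : Fin n, (i : ℕ) < k → (σ i + k : ℕ) ≤ 2 * i + 1 + t :=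
  (hσ.hasRowPositions_iterate t).eq_one_iff hσ

theorem iterate_reduction_eq_one_iff_forall_ge (hσ : IsSplitAt σ k) (t : ℕ) :
    reduction^[t] σ = 1 ↔ ∀ i : Fin n, k ≤ i → (2 * i : ℕ) ≤ σ i + k + t := by
  rw [← revConj_eq_one_iff, (semiconj_revConj_reduction.iterate_right t).eq,
    hσ.revConj.iterate_reduction_eq_one_iff_forall_lt, Fin.revPerm.forall_congr_left]
  refine forall_congr' fun i ↦ ?_
  have := hσ.le
  simp only [Fin.revPerm_symm, Fin.revPerm_apply, revConj_apply, Fin.rev_rev, Fin.val_rev]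
  refine imp_congr ?_ ?_ <;> omega

end IsSplitAt

end RowPositions

theorem isSplitAt_of_strangCanonical {n : ℕ} {σ : Equiv.Perm (Fin n)} (hfree : ∀ i, σ i ≠ i)
    (hrs : RowSettled σ) (hsc : StrangCanonical σ)
    (hcut : ∀ c : Fin n, IsCutPoint σ c → (c : ℕ) = n - 1) {m : Fin n}
    (hm : (σ m : ℕ) = n - 1) : IsSplitAt σ (m + 1) := by
  have hmpos : m < σ m := by
    have := hfree m
    omega
  have hpos : ∀ i ≤ m, i < σ i := fun i him ↦ by
    rcases him.eq_or_lt with rfl | him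
    · exact hmpos
    have hsection : SameSection σ i m := ⟨him.le, fun c _ hcm hc ↦ by
      have := hcut c hc
      omega⟩
    by_contra! hi
    exact hrs i m him hsection ⟨hi.lt_of_ne (hfree i), hmpos⟩
  have hneg : ∀ i, m < i → σ i < i := fun i hmi ↦ by
    by_contra! hi
    have := hsc.1 m i hmi hmpos (hi.lt_of_ne (hfree i).symm)
    omega
  exact {
    le := m.isLt
    lt_apply i hi := hpos i (by omega)
    apply_lt i hi := hneg i (by omega)
    apply_lt_apply_of_lt i j hij hj :=
      hsc.1 i j hij (hpos i (by omega)) (hpos j (by omega))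
    apply_lt_apply_of_le i j hij hi :=
      hsc.2 i j hij (hneg i (by omega)) (hneg j (by omega)) }

/-- Exact count of reduction iterations for a fixed-point-free row-settled
Strang canonical single-section permutation.  Indices are 0-based; the 1-based quantities of
the informal statement are `i + 1`, `m + 1`, `σ(i) + 1`, so the two maxima read
`(σ(i)+1) + (m+1) - 2(i+1)` over `i ≤ m` and `2(i+1) - (m+1) - 1 - (σ(i)+1)` over `i > m`. -/
theorem stmt_8 (n : ℕ) (hn : 2 ≤ n) (σ : Equiv.Perm (Fin n))
    (hfree : ∀ i : Fin n, σ i ≠ i)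
    (hrs : RowSettled σ) (hsc : StrangCanonical σ)
    (hcut : ∀ c : Fin n, IsCutPoint σ c → (c : ℕ) = n - 1)
    (m : Fin n) (hm : σ m = ⟨n - 1, by omega⟩)
    (q : ℕ) (hq : reduction^[q] σ = 1) (hqmin : ∀ k < q, reduction^[k] σ ≠ 1) :
    IsGreatest {v : ℤ | ∃ i : Fin n, i ≤ m ∧
        v = ((σ i : ℤ) + 1) + ((m : ℤ) + 1) - 2 * ((i : ℤ) + 1)} (q : ℤ) ∧
    IsGreatest {v : ℤ | ∃ i : Fin n, m < i ∧
        v = 2 * ((i : ℤ) + 1) - ((m : ℤ) + 1) - 1 - ((σ i : ℤ) + 1)} (q : ℤ) := by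
  have hσ : IsSplitAt σ (m + 1) :=
    isSplitAt_of_strangCanonical hfree hrs hsc hcut (by rw [hm])
  have hq0 : q ≠ 0 := by
    rintro rfl
    exact hfree m (congrArg (· m) hq)
  have hpred : reduction^[q - 1] σ ≠ 1 := hqmin (q - 1) (by omega)
  constructor <;> apply isGreatest_of_pred_notMem_upperBounds
  · rintro _ ⟨i, hi, rfl⟩
    have := (hσ.iterate_reduction_eq_one_iff_forall_lt q).1 hq i (by omega)
    omega
  · refine fun hub ↦ hpred ((hσ.iterate_reduction_eq_one_iff_forall_lt _).2 fun i hi ↦ ?_)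
    have := hub ⟨i, by omega, rfl⟩
    rw [Order.pred_eq_sub_one] at this
    omega
  · rintro _ ⟨i, hi, rfl⟩
    have := (hσ.iterate_reduction_eq_one_iff_forall_ge q).1 hq i hi
    omega
  · refine fun hub ↦ hpred ((hσ.iterate_reduction_eq_one_iff_forall_ge _).2 fun i hi ↦ ?_)
    have := hub ⟨i, hi, rfl⟩
    rw [Order.pred_eq_sub_one] at this
    omega
end
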